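/- Quantitative Kazhdan–Margulis lemma: For every d ≥ 2 there are positive constants k₀ = k₀(d) and l₀ = l₀(d) such that for every h ∈ SL_d(ℝ), the group h·SL_d(ℤ)·h⁻¹ contains a non-trivial unipotent element u (i.e. u ≠ 1 and (u − 1)^d = 0) with ‖u − 1‖ ≤ l₀·‖π(h)‖^{−k₀}, where ‖π(h)‖ = inf{‖h·γ‖ : γ ∈ SL_d(ℤ)}. -/

import Mathlib

open Matrix Pointwise

/-- The `ℓ²`-norm of a vector in `ℝᵈ`. -/
noncomputable def rvNorm {d : ℕ} (x : Fin d → ℝ) : ℝ :=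
  Real.sqrt (∑ i, x i ^ 2)

/-- The operator norm of a real `d × d` matrix with respect to the Euclidean norm on `ℝᵈ`
(supremum over the closed unit ball). -/
noncomputable def rOpNorm {d : ℕ} (M : Matrix (Fin d) (Fin d) ℝ) : ℝ :=
  sSup {r : ℝ | ∃ x : Fin d → ℝ, rvNorm x ≤ 1 ∧ r = rvNorm (M.mulVec x)}

/-!
By Siegel's reduction theory, some `γ ∈ SL_d(ℤ)` brings `h` to the form `h γ = k a u`, with `k`
orthogonal, `a` a positive diagonal matrix satisfying `a i ≤ 2 * a (i + 1)`, and `u` upper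
unitriangular with bounded entries: take the first column of `h γ` nearly shortest among all the
columns of the matrices in `h SL_d(ℤ)`, reduce the remaining block by induction on the dimension,
and translate the first row modulo its leading entry.

Let `E` be the elementary matrix with its `1` in the upper right corner. Since `u E u⁻¹ = E`,
conjugating `E` by `h γ` gives `a 0 / a (d - 1)` times a matrix of norm one, whereas `‖h γ‖` is at
most a constant times `a (d - 1)`, and `a 0` is bounded because `det h = 1`. Hence the unipotent
element `h γ (1 + E) (h γ)⁻¹` satisfies the estimate with `k₀ = 1`.
-/

open scoped Matrix.Norms.L2Operator MatrixGroups
open WithLp (toLp)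

section EuclideanOperatorNorm

lemma rvNorm_eq_norm_toLp {d : ℕ} (x : Fin d → ℝ) : rvNorm x = ‖toLp 2 x‖ := by
  simp [rvNorm, EuclideanSpace.norm_eq]

lemma rOpNorm_eq_l2_opNorm {d : ℕ} (M : Matrix (Fin d) (Fin d) ℝ) : rOpNorm M = ‖M‖ := by
  rw [cstar_norm_def, ← ContinuousLinearMap.sSup_unitClosedBall_eq_norm, rOpNorm]
  congr 1
  ext r
  simp only [rvNorm_eq_norm_toLp, Set.mem_ofPred_eq, Set.mem_image, mem_closedBall_zero_iff]
  exact ⟨fun ⟨x, hx, hr⟩ => ⟨toLp 2 x, hx, hr.symm⟩, fun ⟨x, hx, hr⟩ => ⟨x.ofLp, hx, hr.symm⟩⟩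

variable {𝕜 m n : Type*} [RCLike 𝕜] [Fintype m] [Fintype n] [DecidableEq n]

lemma norm_col_le_l2_opNorm (A : Matrix m n 𝕜) (j : n) : ‖toLp 2 (A.col j)‖ ≤ ‖A‖ := by
  simpa using A.l2_opNorm_mulVec (EuclideanSpace.single j 1)

lemma norm_mulVec_of_mem_unitaryGroup {U : Matrix n n 𝕜} (hU : U ∈ unitaryGroup n 𝕜)
    (x : n → 𝕜) : ‖toLp 2 (U *ᵥ x)‖ = ‖toLp 2 x‖ :=
  ContinuousLinearMap.norm_map_of_mem_unitary
    (Unitary.map_mem (toEuclideanCLM (n := n) (𝕜 := 𝕜)) hU) (toLp 2 x)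

lemma norm_col_mul_of_mem_unitaryGroup {U : Matrix n n 𝕜} (hU : U ∈ unitaryGroup n 𝕜)
    (A : Matrix n n 𝕜) (j : n) : ‖toLp 2 ((U * A).col j)‖ = ‖toLp 2 (A.col j)‖ :=
  norm_mulVec_of_mem_unitaryGroup hU (A.col j)

lemma l2_opNorm_single [DecidableEq m] (i : m) (j : n) (c : 𝕜) : ‖single i j c‖ = ‖c‖ := by
  have h : ‖single i j c‖ * ‖single i j c‖ = ‖c‖ * ‖c‖ := by
    rw [← l2_opNorm_conjTranspose_mul_self, conjTranspose_single, single_mul_single_same,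
      ← diagonal_single, l2_opNorm_diagonal, Pi.norm_single, norm_mul, norm_star]
  exact (mul_self_inj (norm_nonneg _) (norm_nonneg _)).1 h

lemma l2_opNorm_le_card_mul_card {A : Matrix m n 𝕜} {c : ℝ} (hA : ∀ i j, ‖A i j‖ ≤ c) :
    ‖A‖ ≤ Fintype.card m * Fintype.card n * c := by
  classical
  calc ‖A‖ = ‖∑ i, ∑ j, single i j (A i j)‖ := by rw [← matrix_eq_sum_single A]
    _ ≤ ∑ _i : m, ∑ _j : n, c :=
        norm_sum_le_of_le _ fun i _ => norm_sum_le_of_le _ fun j _ =>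
          (l2_opNorm_single i j _).trans_le (hA i j)
    _ = Fintype.card m * Fintype.card n * c := by simp [mul_assoc]

end EuclideanOperatorNorm

section ShortColumns

lemma exists_forall_le_mul {ι : Type*} [Nonempty ι] {f : ι → ℝ} {c q : ℝ} (hc : 0 < c)
    (hf : ∀ i, c ≤ f i) (hq : 1 < q) : ∃ i, ∀ j, f i ≤ q * f j := by
  have hpos : 0 < ⨅ i, f i := hc.trans_le (le_ciInf hf)
  have hbdd : BddBelow (Set.range f) := ⟨c, Set.forall_mem_range.2 hf⟩
  obtain ⟨i, hi⟩ := exists_lt_of_ciInf_lt (lt_mul_of_one_lt_left hpos hq)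
  exact ⟨i, fun j => hi.le.trans (mul_le_mul_of_nonneg_left (ciInf_le hbdd j) (by positivity))⟩

variable {n : Type*} [Fintype n]

lemma one_le_norm_intCast {v : n → ℤ} (hv : v ≠ 0) : 1 ≤ ‖toLp 2 fun i => (v i : ℝ)‖ := by
  obtain ⟨i, hi⟩ := Function.ne_iff.1 hv
  calc (1 : ℝ) ≤ ‖(v i : ℝ)‖ := by
        rw [Int.norm_cast_real, Int.norm_eq_abs]; exact_mod_cast Int.one_le_abs hi
    _ ≤ _ := PiLp.norm_apply_le (toLp 2 fun i => (v i : ℝ)) i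

variable [DecidableEq n]

lemma exists_pos_le_norm_mulVec_intCast {H : Matrix n n ℝ} (hH : H.det ≠ 0) :
    ∃ c > 0, ∀ v : n → ℤ, v ≠ 0 → c ≤ ‖toLp 2 (H *ᵥ fun i => (v i : ℝ))‖ := by
  refine ⟨(‖H⁻¹‖ + 1)⁻¹, by positivity, fun v hv => ?_⟩
  rw [inv_le_iff_one_le_mul₀' (by positivity)]
  calc 1 ≤ ‖toLp 2 fun i => (v i : ℝ)‖ := one_le_norm_intCast hv
    _ = ‖toLp 2 (H⁻¹ *ᵥ H *ᵥ fun i => (v i : ℝ))‖ := by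
        rw [mulVec_mulVec, nonsing_inv_mul _ hH.isUnit, one_mulVec]
    _ ≤ ‖H⁻¹‖ * ‖toLp 2 (H *ᵥ fun i => (v i : ℝ))‖ := H⁻¹.l2_opNorm_mulVec (toLp 2 _)
    _ ≤ (‖H⁻¹‖ + 1) * ‖toLp 2 (H *ᵥ fun i => (v i : ℝ))‖ := by gcongr; linarith

lemma exists_pos_le_norm_col_mul {H : Matrix n n ℝ} (hH : H.det ≠ 0) :
    ∃ c > 0, ∀ (γ : Matrix.SpecialLinearGroup n ℤ) (j : n),
      c ≤ ‖toLp 2 ((H * (γ : Matrix n n ℤ).map Int.cast).col j)‖ := by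
  obtain ⟨c, hc, h⟩ := exists_pos_le_norm_mulVec_intCast hH
  exact ⟨c, hc, fun γ j => h ((γ : Matrix n n ℤ).col j) fun h0 =>
    γ.det_ne_zero (det_eq_zero_of_column_eq_zero j (congrFun h0))⟩

lemma exists_specialLinearGroup_smul_single_eq (R : Type*) [CommRing R] (i j : n) :
    ∃ σ : Matrix.SpecialLinearGroup n R, σ • (Pi.single i 1 : n → R) = Pi.single j 1 := by
  obtain rfl | hij := eq_or_ne i j
  · exact ⟨1, one_smul _ _⟩
  · refine ⟨.transvection hij (-1) * .transvection hij.symm 1, ?_⟩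
    rw [mul_smul, SpecialLinearGroup.transvection_smul_single_snd, smul_add, one_smul,
      SpecialLinearGroup.transvection_smul_single_fst,
      SpecialLinearGroup.transvection_smul_single_snd]
    simp

lemma exists_col_mul_eq_col (R : Type*) [CommRing R] (i j : n) :
    ∃ σ : Matrix.SpecialLinearGroup n R, ∀ A : Matrix n n R, (A * σ).col i = A.col j := by
  obtain ⟨σ, hσ⟩ := exists_specialLinearGroup_smul_single_eq R i j
  refine ⟨σ, fun A => ?_⟩
  rw [← mulVec_single_one, ← mulVec_mulVec, ← mulVec_single_one, ← hσ]
  rfl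

lemma exists_nearly_shortest_col {H : Matrix n n ℝ} (hH : H.det ≠ 0) {q : ℝ} (hq : 1 < q)
    (i : n) : ∃ γ : Matrix.SpecialLinearGroup n ℤ, ∀ (δ : Matrix.SpecialLinearGroup n ℤ) (j : n),
      ‖toLp 2 ((H * (γ : Matrix n n ℤ).map Int.cast).col i)‖ ≤
        q * ‖toLp 2 ((H * (δ : Matrix n n ℤ).map Int.cast).col j)‖ := by
  have : Nonempty n := ⟨i⟩
  obtain ⟨c, hc, hcol⟩ := exists_pos_le_norm_col_mul hH
  obtain ⟨⟨γ, k⟩, hγ⟩ := exists_forall_le_mul hc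
    (fun p : Matrix.SpecialLinearGroup n ℤ × n => hcol p.1 p.2) hq
  obtain ⟨σ, hσ⟩ := exists_col_mul_eq_col ℤ i k
  have hσγ : (H * ((γ * σ : Matrix.SpecialLinearGroup n ℤ) : Matrix n n ℤ).map Int.cast).col i =
      (H * (γ : Matrix n n ℤ).map Int.cast).col k :=
    congrArg (fun v : n → ℤ => H *ᵥ fun l => (v l : ℝ)) (hσ γ)
  exact ⟨γ * σ, fun δ j => hσγ ▸ hγ (δ, j)⟩

end ShortColumns

/-- The block upper triangular matrix with rows `(r, v)` and `(0, M)`. -/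
def borderedMatrix {R : Type*} [Zero R] {n : ℕ} (r : R) (v : Fin n → R)
    (M : Matrix (Fin n) (Fin n) R) : Matrix (Fin (n + 1)) (Fin (n + 1)) R :=
  of (Fin.cons (Fin.cons r v) fun i => Fin.cons 0 (M i))

section BorderedMatrix

variable {R : Type*} [CommRing R] {n : ℕ}

@[simp] lemma borderedMatrix_apply_zero_zero (r : R) (v : Fin n → R)
    (M : Matrix (Fin n) (Fin n) R) :
    borderedMatrix r v M 0 0 = r := rfl

@[simp] lemma borderedMatrix_apply_zero_succ (r : R) (v : Fin n → R) (M : Matrix (Fin n) (Fin n) R)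
    (j : Fin n) :
    borderedMatrix r v M 0 j.succ = v j := rfl

@[simp] lemma borderedMatrix_apply_succ_zero (r : R) (v : Fin n → R) (M : Matrix (Fin n) (Fin n) R)
    (i : Fin n) :
    borderedMatrix r v M i.succ 0 = 0 := rfl

@[simp] lemma borderedMatrix_apply_succ_succ (r : R) (v : Fin n → R) (M : Matrix (Fin n) (Fin n) R)
    (i j : Fin n) : borderedMatrix r v M i.succ j.succ = M i j := rfl

lemma eq_borderedMatrix_of_col_zero {A : Matrix (Fin (n + 1)) (Fin (n + 1)) R} {r : R}
    (hA : A.col 0 = (Pi.single 0 r : Fin (n + 1) → R)) :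
    A = borderedMatrix r (fun j => A 0 j.succ) (A.submatrix Fin.succ Fin.succ) := by
  ext i j
  cases j using Fin.cases with
  | zero =>
    cases i using Fin.cases with
    | zero => exact (congrFun hA 0).trans (Pi.single_eq_same _ _)
    | succ i => exact (congrFun hA i.succ).trans (Pi.single_eq_of_ne i.succ_ne_zero _)
  | succ j => cases i using Fin.cases <;> rfl

lemma borderedMatrix_mul (r s : R) (v w : Fin n → R) (M N : Matrix (Fin n) (Fin n) R) :
    borderedMatrix r v M * borderedMatrix s w N =
      borderedMatrix (r * s) (r • w + v ᵥ* N) (M * N) := by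
  ext i j
  cases i using Fin.cases <;> cases j using Fin.cases <;>
    simp [mul_apply, Fin.sum_univ_succ, vecMul, dotProduct]

lemma diagonal_cons_eq_borderedMatrix (r : R) (a : Fin n → R) :
    diagonal (Fin.cons r a : Fin (n + 1) → R) = borderedMatrix r 0 (diagonal a) := by
  ext i j
  cases i using Fin.cases <;> cases j using Fin.cases <;>
    simp [diagonal_apply, eq_comm (a := (0 : Fin _))]

lemma borderedMatrix_one : borderedMatrix (1 : R) (0 : Fin n → R) 1 = 1 := by
  rw [← diagonal_one, ← diagonal_cons_eq_borderedMatrix, ← diagonal_one]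
  congr 1
  ext i
  cases i using Fin.cases <;> rfl

lemma borderedMatrix_map_intCast (r : ℤ) (v : Fin n → ℤ) (M : Matrix (Fin n) (Fin n) ℤ) :
    (borderedMatrix r v M).map Int.cast =
      borderedMatrix (r : R) (fun j => (v j : R)) (M.map Int.cast) := by
  ext i j
  cases i using Fin.cases <;> cases j using Fin.cases <;> simp

lemma det_borderedMatrix (r : R) (v : Fin n → R) (M : Matrix (Fin n) (Fin n) R) :
    (borderedMatrix r v M).det = r * M.det := by
  have hM : (borderedMatrix r v M).submatrix Fin.succ Fin.succ = M := rfl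
  simp [det_succ_column_zero, Fin.sum_univ_succ, hM]

lemma borderedMatrix_mem_orthogonalGroup {K : Matrix (Fin n) (Fin n) ℝ}
    (hK : K ∈ orthogonalGroup (Fin n) ℝ) :
    borderedMatrix 1 0 K ∈ orthogonalGroup (Fin (n + 1)) ℝ := by
  have htranspose : (borderedMatrix 1 0 K)ᵀ = borderedMatrix 1 0 Kᵀ := by
    ext i j
    cases i using Fin.cases <;> cases j using Fin.cases <;> simp
  rw [mem_orthogonalGroup_iff] at hK ⊢
  rw [htranspose, borderedMatrix_mul, hK, zero_vecMul, smul_zero, add_zero, mul_one,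
    borderedMatrix_one]

lemma norm_sq_col_succ_borderedMatrix (r : ℝ) (v : Fin n → ℝ) (M : Matrix (Fin n) (Fin n) ℝ)
    (j : Fin n) :
    ‖toLp 2 ((borderedMatrix r v M).col j.succ)‖ ^ 2 = v j ^ 2 + ‖toLp 2 (M.col j)‖ ^ 2 := by
  simp [EuclideanSpace.norm_sq_eq, Fin.sum_univ_succ]

end BorderedMatrix

section Triangularization

lemma exists_mem_orthogonalGroup_mulVec_eq {ι : Type*} [Fintype ι] [DecidableEq ι] {v w : ι → ℝ}
    (h : ‖toLp 2 v‖ = ‖toLp 2 w‖) : ∃ K ∈ orthogonalGroup ι ℝ, K *ᵥ v = w := by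
  let e : EuclideanSpace ℝ ι ≃ₗᵢ[ℝ] EuclideanSpace ℝ ι :=
    (ℝ ∙ (toLp 2 v - toLp 2 w))ᗮ.reflection
  let u := Unitary.linearIsometryEquiv.symm e
  refine ⟨(toEuclideanCLM (n := ι) (𝕜 := ℝ)).symm u,
    Unitary.map_mem (toEuclideanCLM (n := ι) (𝕜 := ℝ)).symm u.2, ?_⟩
  rw [← ofLp_toEuclideanCLM _ (toLp 2 v), StarAlgEquiv.apply_symm_apply]
  exact congrArg WithLp.ofLp (Submodule.reflection_sub h)

lemma exists_orthogonal_mul_borderedMatrix {n : ℕ} (A : Matrix (Fin (n + 1)) (Fin (n + 1)) ℝ) :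
    ∃ K ∈ orthogonalGroup (Fin (n + 1)) ℝ, ∃ v M,
      A = K * borderedMatrix ‖toLp 2 (A.col 0)‖ v M := by
  obtain ⟨K, hK, hcol⟩ := exists_mem_orthogonalGroup_mulVec_eq
    (v := A.col 0) (w := Pi.single 0 ‖toLp 2 (A.col 0)‖)
    ((PiLp.norm_single 2 _ 0 _).trans (norm_norm _)).symm
  replace hcol : (K * A).col 0 = Pi.single 0 ‖toLp 2 (A.col 0)‖ := hcol
  have hA : A = star K * (K * A) := by rw [← mul_assoc, mem_unitaryGroup_iff'.1 hK, one_mul]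
  exact ⟨star K, Unitary.star_mem hK, _, _,
    hA.trans (congrArg (star K * ·) (eq_borderedMatrix_of_col_zero hcol))⟩

end Triangularization

/-- A presentation `k * diagonal a * u` of `M` as a point of a Siegel set, given by its Iwasawa
coordinates: `k` is orthogonal, `a` is positive with `a i ≤ 2 * a (i + 1)` (stated as the
monotonicity of `2 ^ i * a i`), and `u` is upper unitriangular with off-diagonal entries in
`[-1/2, 1/2]`. -/
structure SiegelDecomposition {n : ℕ} (M : Matrix (Fin n) (Fin n) ℝ) where
  k : Matrix (Fin n) (Fin n) ℝ
  a : Fin n → ℝ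
  u : Matrix (Fin n) (Fin n) ℝ
  k_mem : k ∈ orthogonalGroup (Fin n) ℝ
  a_pos : ∀ i, 0 < a i
  monotone_two_pow_mul_a : Monotone fun i : Fin n => 2 ^ (i : ℕ) * a i
  u_isUpperTriangular : u.IsUpperTriangular
  u_diag : ∀ i, u i i = 1
  abs_u_le : ∀ i j, i < j → |u i j| ≤ 1 / 2
  mul_eq : k * diagonal a * u = M

namespace SiegelDecomposition

variable {n : ℕ} {M : Matrix (Fin n) (Fin n) ℝ}

/-- Left translation by an orthogonal matrix. -/
def orthogonalMul {K : Matrix (Fin n) (Fin n) ℝ} (hK : K ∈ orthogonalGroup (Fin n) ℝ)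
    (S : SiegelDecomposition M) : SiegelDecomposition (K * M) where
  __ := S
  k := K * S.k
  k_mem := mul_mem hK S.k_mem
  mul_eq := by rw [mul_assoc, mul_assoc, ← mul_assoc S.k, S.mul_eq]

/-- The decomposition of a `0 × 0` matrix, where induction on the dimension starts. -/
def ofIsEmpty (M : Matrix (Fin 0) (Fin 0) ℝ) : SiegelDecomposition M where
  k := 1
  a := 1
  u := 1
  k_mem := one_mem _
  a_pos := isEmptyElim
  monotone_two_pow_mul_a := Subsingleton.monotone _
  u_isUpperTriangular := isEmptyElim
  u_diag := isEmptyElim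
  abs_u_le := isEmptyElim
  mul_eq := Subsingleton.elim _ _

/-- Extension of a Siegel decomposition by a first row and column. -/
def bordered (S : SiegelDecomposition M) {r : ℝ} (hr : 0 < r)
    (hra : ∀ i : Fin n, r ≤ 2 ^ (i + 1 : ℕ) * S.a i) {w : Fin n → ℝ} (hw : ∀ i, |w i| ≤ 1 / 2) :
    SiegelDecomposition (borderedMatrix r (r • w) M) where
  k := borderedMatrix 1 0 S.k
  a := Fin.cons r S.a
  u := borderedMatrix 1 w S.u
  k_mem := borderedMatrix_mem_orthogonalGroup S.k_mem
  a_pos := Fin.cases hr S.a_pos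
  monotone_two_pow_mul_a i j hij := by
    cases i using Fin.cases with
    | zero =>
      cases j using Fin.cases with
      | zero => rfl
      | succ j => simpa using hra j
    | succ i =>
      cases j using Fin.cases with
      | zero => simp at hij
      | succ j =>
        have := S.monotone_two_pow_mul_a (Fin.succ_le_succ_iff.1 hij)
        simp only [Fin.val_succ, Fin.cons_succ, pow_succ]
        linarith
  u_isUpperTriangular i j hij := by
    cases i using Fin.cases with
    | zero => simp at hij
    | succ i =>
      cases j using Fin.cases with
      | zero => rfl
      | succ j => exact S.u_isUpperTriangular (Fin.succ_lt_succ_iff.1 hij)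
  u_diag := Fin.cases rfl S.u_diag
  abs_u_le i j hij := by
    cases j using Fin.cases with
    | zero => simp at hij
    | succ j =>
      cases i using Fin.cases with
      | zero => exact hw j
      | succ i => exact S.abs_u_le i j (Fin.succ_lt_succ_iff.1 hij)
  mul_eq := by
    rw [diagonal_cons_eq_borderedMatrix, borderedMatrix_mul, borderedMatrix_mul, S.mul_eq]
    simp

lemma abs_det_eq_prod (S : SiegelDecomposition M) : |M.det| = ∏ i, S.a i := by
  have hk : |S.k.det| = 1 := CStarRing.norm_of_mem_unitary (E := ℝ) (det_of_mem_unitary S.k_mem)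
  have ha : |∏ i, S.a i| = ∏ i, S.a i := abs_of_pos (Finset.prod_pos fun i _ => S.a_pos i)
  have hu : S.u.det = 1 := by
    simp [det_of_isUpperTriangular S.u_isUpperTriangular, S.u_diag]
  have hM : M.det = S.k.det * (∏ i, S.a i) * S.u.det := by
    rw [← det_diagonal, ← det_mul, ← det_mul, S.mul_eq]
  rw [hM, hu, mul_one, abs_mul, hk, one_mul, ha]

lemma abs_u_le_one (S : SiegelDecomposition M) (i j : Fin n) : |S.u i j| ≤ 1 := by
  obtain h | rfl | h := lt_trichotomy i j
  · linarith [S.abs_u_le i j h]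
  · simp [S.u_diag]
  · simp [S.u_isUpperTriangular h]

section PositiveDimension

variable {M : Matrix (Fin (n + 1)) (Fin (n + 1)) ℝ} (S : SiegelDecomposition M)

lemma u_mulVec_single_zero : S.u *ᵥ Pi.single 0 1 = Pi.single 0 1 := by
  ext i
  rw [mulVec_single_one, col_apply]
  obtain rfl | hi := eq_or_ne i 0
  · rw [S.u_diag, Pi.single_eq_same]
  · rw [S.u_isUpperTriangular (Fin.pos_of_ne_zero hi), Pi.single_eq_of_ne hi]

lemma single_last_vecMul_u :
    Pi.single (Fin.last n) 1 ᵥ* S.u = Pi.single (Fin.last n) 1 := by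
  ext j
  rw [single_one_vecMul, row_apply]
  obtain rfl | hj := eq_or_ne j (Fin.last n)
  · rw [S.u_diag, Pi.single_eq_same]
  · have huj : S.u (Fin.last n) j = 0 := S.u_isUpperTriangular (Fin.lt_last_iff_ne_last.2 hj)
    rw [huj, Pi.single_eq_of_ne hj]

lemma mulVec_single_zero : M *ᵥ Pi.single 0 1 = S.a 0 • S.k *ᵥ Pi.single 0 1 := by
  have ha : diagonal S.a *ᵥ Pi.single 0 1 = S.a 0 • Pi.single 0 1 := by simp [← Pi.single_smul]
  calc M *ᵥ Pi.single 0 1 = S.k *ᵥ diagonal S.a *ᵥ S.u *ᵥ Pi.single 0 1 := by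
        rw [mulVec_mulVec, mulVec_mulVec, S.mul_eq]
    _ = S.a 0 • S.k *ᵥ Pi.single 0 1 := by rw [S.u_mulVec_single_zero, ha, mulVec_smul]

lemma single_last_vecMul :
    Pi.single (Fin.last n) 1 ᵥ* (star S.k * M) = S.a (Fin.last n) • Pi.single (Fin.last n) 1 := by
  have ha : Pi.single (Fin.last n) 1 ᵥ* diagonal S.a =
      S.a (Fin.last n) • Pi.single (Fin.last n) 1 := by simp [← Pi.single_smul]
  have hM : star S.k * M = diagonal S.a * S.u := by
    nth_rw 2 [← S.mul_eq]
    rw [mul_assoc, ← mul_assoc, mem_unitaryGroup_iff'.1 S.k_mem, one_mul]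
  rw [hM, ← vecMul_vecMul, ha, smul_vecMul, S.single_last_vecMul_u]

lemma a_le_two_pow_mul_a_last (i : Fin (n + 1)) : S.a i ≤ 2 ^ n * S.a (Fin.last n) :=
  calc S.a i ≤ 2 ^ (i : ℕ) * S.a i :=
        le_mul_of_one_le_left (S.a_pos i).le (one_le_pow₀ one_le_two)
    _ ≤ 2 ^ n * S.a (Fin.last n) := S.monotone_two_pow_mul_a (Fin.le_last i)

lemma a_zero_le_two_pow_mul_a (i : Fin (n + 1)) : S.a 0 ≤ 2 ^ (i : ℕ) * S.a i := by
  simpa using S.monotone_two_pow_mul_a (Fin.zero_le i)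

lemma norm_col_zero : ‖toLp 2 (M.col 0)‖ = S.a 0 := by
  rw [← mulVec_single_one, S.mulVec_single_zero, WithLp.toLp_smul, norm_smul,
    norm_mulVec_of_mem_unitaryGroup S.k_mem, Real.norm_of_nonneg (S.a_pos 0).le]
  simp

lemma a_zero_le_two_pow (hM : |M.det| = 1) : S.a 0 ≤ 2 ^ n := by
  refine (pow_le_pow_iff_left₀ (S.a_pos 0).le (by positivity) n.succ_ne_zero).1 ?_
  calc S.a 0 ^ (n + 1) = ∏ _i : Fin (n + 1), S.a 0 := by simp
    _ ≤ ∏ i, 2 ^ n * S.a i := Finset.prod_le_prod (fun _ _ => (S.a_pos 0).le) fun i _ =>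
        (S.a_zero_le_two_pow_mul_a i).trans (by
          have := (S.a_pos i).le
          gcongr
          exacts [one_le_two, Fin.le_last i])
    _ = (2 ^ n) ^ (n + 1) := by
        rw [Finset.prod_mul_distrib, ← S.abs_det_eq_prod, hM, mul_one]
        simp

lemma l2_opNorm_le : ‖M‖ ≤ 2 ^ n * S.a (Fin.last n) * (n + 1) ^ 2 := by
  have hpos : 0 ≤ 2 ^ n * S.a (Fin.last n) := mul_nonneg (by positivity) (S.a_pos _).le
  have hdiag : ‖S.a‖ ≤ 2 ^ n * S.a (Fin.last n) := (pi_norm_le_iff_of_nonneg hpos).2 fun i => by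
    rw [Real.norm_of_nonneg (S.a_pos i).le]; exact S.a_le_two_pow_mul_a_last i
  have hu : ‖S.u‖ ≤ (n + 1) ^ 2 := by
    simpa [sq] using l2_opNorm_le_card_mul_card (A := S.u) S.abs_u_le_one
  calc ‖M‖ = ‖S.k * (diagonal S.a * S.u)‖ := by rw [← mul_assoc, S.mul_eq]
    _ = ‖diagonal S.a * S.u‖ := CStarRing.norm_mem_unitary_mul _ S.k_mem
    _ ≤ ‖diagonal S.a‖ * ‖S.u‖ := l2_opNorm_mul _ _
    _ ≤ 2 ^ n * S.a (Fin.last n) * (n + 1) ^ 2 := by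
        rw [l2_opNorm_diagonal]; gcongr

lemma mul_single_zero_last :
    M * single 0 (Fin.last n) 1 =
      (S.a 0 / S.a (Fin.last n)) • (S.k * single 0 (Fin.last n) 1 * star S.k) * M := by
  have hlast : S.a (Fin.last n) ≠ 0 := (S.a_pos _).ne'
  rw [single_eq_single_vecMulVec_single, mul_vecMulVec, S.mulVec_single_zero, smul_mul_assoc,
    mul_assoc, mul_assoc, ← mul_assoc S.k, mul_vecMulVec, vecMulVec_mul, S.single_last_vecMul,
    smul_vecMulVec, vecMulVec_smul, smul_smul, div_mul_cancel₀ _ hlast]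

lemma l2_opNorm_conj_single (hM : M.det ≠ 0) :
    ‖M * single 0 (Fin.last n) 1 * M⁻¹‖ = S.a 0 / S.a (Fin.last n) := by
  rw [S.mul_single_zero_last, mul_assoc, mul_nonsing_inv _ hM.isUnit, mul_one, norm_smul,
    CStarRing.norm_mul_mem_unitary _ (Unitary.star_mem S.k_mem),
    CStarRing.norm_mem_unitary_mul _ S.k_mem, l2_opNorm_single, norm_one, mul_one]
  exact Real.norm_of_nonneg (div_pos (S.a_pos _) (S.a_pos _)).le

include S in
lemma l2_opNorm_conj_single_mul_l2_opNorm_le (hM : |M.det| = 1) :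
    ‖M * single 0 (Fin.last n) 1 * M⁻¹‖ * ‖M‖ ≤ 4 ^ n * (n + 1) ^ 2 := by
  have hlast := S.a_pos (Fin.last n)
  have hdet : M.det ≠ 0 := abs_pos.1 (hM ▸ one_pos)
  calc ‖M * single 0 (Fin.last n) 1 * M⁻¹‖ * ‖M‖
      ≤ S.a 0 / S.a (Fin.last n) * (2 ^ n * S.a (Fin.last n) * (n + 1) ^ 2) := by
        rw [S.l2_opNorm_conj_single hdet]
        exact mul_le_mul_of_nonneg_left S.l2_opNorm_le (div_pos (S.a_pos 0) hlast).le
    _ = S.a 0 * 2 ^ n * (n + 1) ^ 2 := by field_simp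
    _ ≤ 2 ^ n * 2 ^ n * (n + 1) ^ 2 := by gcongr; exact S.a_zero_le_two_pow hM
    _ = 4 ^ n * (n + 1) ^ 2 := by rw [← mul_pow]; norm_num

end PositiveDimension

end SiegelDecomposition

section Reduction

lemma exists_borderedMatrix_mul_eq_borderedMatrix_smul {n : ℕ} {r : ℝ} (hr : r ≠ 0)
    (v : Fin n → ℝ) (M : Matrix (Fin n) (Fin n) ℝ) (γ : SL(n, ℤ)) :
    ∃ (β : SL(n + 1, ℤ)) (w : Fin n → ℝ), (∀ j, |w j| ≤ 1 / 2) ∧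
      borderedMatrix r v M * (β : Matrix (Fin (n + 1)) (Fin (n + 1)) ℤ).map Int.cast =
        borderedMatrix r (r • w) (M * (γ : Matrix (Fin n) (Fin n) ℤ).map Int.cast) := by
  let x : Fin n → ℝ := v ᵥ* (γ : Matrix (Fin n) (Fin n) ℤ).map Int.cast
  let k (j : Fin n) : ℤ := -round (x j / r)
  refine ⟨⟨borderedMatrix 1 k γ, by rw [det_borderedMatrix, γ.det_coe, one_mul]⟩,
    fun j => x j / r - round (x j / r), fun j => abs_sub_round _, ?_⟩
  have hrow : r • (fun j => (k j : ℝ)) + x = r • fun j => x j / r - round (x j / r) := by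
    ext j
    simp only [k, Pi.add_apply, Pi.smul_apply, smul_eq_mul, Int.cast_neg]
    field_simp
    ring
  rw [borderedMatrix_map_intCast, borderedMatrix_mul, Int.cast_one, mul_one]
  exact congrArg (fun y => borderedMatrix r y _) hrow

lemma SiegelDecomposition.le_two_mul_a_zero {n : ℕ} {M : Matrix (Fin (n + 1)) (Fin (n + 1)) ℝ}
    (S : SiegelDecomposition M) {r : ℝ} (hr : 0 ≤ r) {w : Fin (n + 1) → ℝ}
    (hw : |w 0| ≤ 1 / 2)
    (hcol : r ≤ 4 / 3 * ‖toLp 2 ((borderedMatrix r (r • w) M).col 1)‖) :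
    r ≤ 2 * S.a 0 := by
  have hnorm : ‖toLp 2 ((borderedMatrix r (r • w) M).col 1)‖ ^ 2 = (r * w 0) ^ 2 + S.a 0 ^ 2 := by
    rw [← S.norm_col_zero]
    exact norm_sq_col_succ_borderedMatrix r (r • w) M 0
  -- Since `|w 0| ≤ 1 / 2`, any factor `q < 2` in `hcol` bounds `r` by a multiple of `S.a 0`;
  -- with `q = 4 / 3` this multiple is less than `2`.
  have hcol_sq : r ^ 2 ≤ (4 / 3) ^ 2 * ((r * w 0) ^ 2 + S.a 0 ^ 2) := by
    rw [← hnorm, ← mul_pow]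
    exact pow_le_pow_left₀ hr hcol 2
  have hw_sq : (r * w 0) ^ 2 ≤ r ^ 2 * (1 / 2) ^ 2 := by
    rw [mul_pow]
    exact mul_le_mul_of_nonneg_left (sq_le_sq' (abs_le.1 hw).1 (abs_le.1 hw).2) (sq_nonneg r)
  have ha := S.a_pos 0
  have ha_sq : 0 < S.a 0 ^ 2 := pow_pos ha 2
  refine (pow_le_pow_iff_left₀ hr (by positivity) two_ne_zero).1 ?_
  linarith

theorem exists_siegelDecomposition {n : ℕ} {H : Matrix (Fin n) (Fin n) ℝ} (hH : H.det ≠ 0) :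
    ∃ γ : SL(n, ℤ),
      Nonempty (SiegelDecomposition (H * (γ : Matrix (Fin n) (Fin n) ℤ).map Int.cast)) := by
  induction n with
  | zero => exact ⟨1, ⟨.ofIsEmpty _⟩⟩
  | succ n ih =>
    obtain ⟨γ₁, hγ₁⟩ := exists_nearly_shortest_col hH (q := 4 / 3) (by norm_num) 0
    set A := H * (γ₁ : Matrix (Fin (n + 1)) (Fin (n + 1)) ℤ).map Int.cast with hA
    obtain ⟨K, hK, v, M, hKM⟩ := exists_orthogonal_mul_borderedMatrix A
    set r := ‖toLp 2 (A.col 0)‖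
    have hdet : K.det * (r * M.det) ≠ 0 := by
      rw [← det_borderedMatrix r v M, ← det_mul, ← hKM, hA, det_mul, ← Int.cast_det, γ₁.det_coe]
      simpa using hH
    have hr : 0 < r := (norm_nonneg _).lt_of_ne' (left_ne_zero_of_mul (right_ne_zero_of_mul hdet))
    obtain ⟨γ₂, ⟨S⟩⟩ := ih (right_ne_zero_of_mul (right_ne_zero_of_mul hdet))
    obtain ⟨β, w, hw, hβ⟩ := exists_borderedMatrix_mul_eq_borderedMatrix_smul hr.ne' v M γ₂
    have hHβ : H * ((γ₁ * β : SL(n + 1, ℤ)) :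
        Matrix (Fin (n + 1)) (Fin (n + 1)) ℤ).map Int.cast =
        K * borderedMatrix r (r • w) (M * (γ₂ : Matrix (Fin n) (Fin n) ℤ).map Int.cast) := by
      rw [Matrix.SpecialLinearGroup.coe_mul, Matrix.map_mul_intCast, ← mul_assoc, ← hA, hKM,
        mul_assoc, hβ]
    have hra (i : Fin n) : r ≤ 2 ^ (i + 1 : ℕ) * S.a i := by
      cases n with
      | zero => exact i.elim0
      | succ n =>
        have hcol := hγ₁ (γ₁ * β) 1
        rw [hHβ, norm_col_mul_of_mem_unitaryGroup hK] at hcol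
        have := S.le_two_mul_a_zero hr.le (hw 0) hcol
        have := S.a_zero_le_two_pow_mul_a i
        rw [pow_succ]
        linarith
    exact ⟨γ₁ * β, ⟨hHβ ▸ (S.bordered hr hra hw).orthogonalMul hK⟩⟩

end Reduction

section UnipotentConjugates

variable {n R : Type*} [Fintype n] [DecidableEq n] [CommRing R]

lemma coe_conj_transvection_sub_one (P : Matrix.SpecialLinearGroup n R) {i j : n} (hij : i ≠ j)
    (c : R) : ((P * .transvection hij c * P⁻¹ : Matrix.SpecialLinearGroup n R) : Matrix n n R) - 1 =
      P * single i j c * (P : Matrix n n R)⁻¹ := by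
  have hP : ((P⁻¹ : Matrix.SpecialLinearGroup n R) : Matrix n n R) = (P : Matrix n n R)⁻¹ := by
    rw [inv_def, P.det_coe, Ring.inverse_one, one_smul, Matrix.SpecialLinearGroup.coe_inv]
  have hunit : IsUnit (P : Matrix n n R).det := by simp
  rw [Matrix.SpecialLinearGroup.coe_mul, Matrix.SpecialLinearGroup.coe_mul, hP,
    SpecialLinearGroup.transvection_coe, mul_add, add_mul, mul_one, mul_nonsing_inv _ hunit,
    add_sub_cancel_left]

lemma conj_single_sq_eq_zero {P : Matrix n n R} (hP : IsUnit P.det) {i j : n} (hij : i ≠ j)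
    (c : R) : (P * single i j c * P⁻¹) ^ 2 = 0 := by
  rw [sq, mul_assoc, mul_assoc, mul_assoc P, nonsing_inv_mul_cancel_left _ _ hP,
    ← mul_assoc (single i j c), single_mul_single_of_ne _ _ _ _ hij.symm, zero_mul, mul_zero]

lemma map_transvection {S : Type*} [CommRing S] (f : R →+* S) {i j : n} (hij : i ≠ j) (c : R) :
    Matrix.SpecialLinearGroup.map f (.transvection hij c) = .transvection hij (f c) := by
  ext k l
  simp [SpecialLinearGroup.transvection_coe, one_apply, single_apply, apply_ite f]

lemma transvection_ne_one {i j : n} (hij : i ≠ j) {c : R} (hc : c ≠ 0) :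
    SpecialLinearGroup.transvection hij c ≠ 1 := fun h => hc <| by
  simpa [SpecialLinearGroup.transvection_coe, hij] using congrArg (fun A => A.1 i j) h

end UnipotentConjugates

section QuotientNorm

variable {n : Type*} [Fintype n] [DecidableEq n]

/-- The norm `‖π(h)‖` of the image of `h` in `SL_n(ℝ) / SL_n(ℤ)`: the infimum of the operator norms
of the representatives `h * γ`. -/
noncomputable def quotientNorm (h : Matrix.SpecialLinearGroup n ℝ) : ℝ :=
  ⨅ γ : Matrix.SpecialLinearGroup n ℤ, ‖(h : Matrix n n ℝ) * (γ : Matrix n n ℤ).map Int.cast‖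

lemma quotientNorm_le (h : Matrix.SpecialLinearGroup n ℝ) (γ : Matrix.SpecialLinearGroup n ℤ) :
    quotientNorm h ≤ ‖(h : Matrix n n ℝ) * (γ : Matrix n n ℤ).map Int.cast‖ :=
  ciInf_le ⟨0, Set.forall_mem_range.2 fun _ => norm_nonneg _⟩ γ

lemma quotientNorm_pos [Nonempty n] (h : Matrix.SpecialLinearGroup n ℝ) : 0 < quotientNorm h := by
  obtain ⟨c, hc, hcol⟩ := exists_pos_le_norm_col_mul h.det_ne_zero
  exact hc.trans_le (le_ciInf fun γ =>
    (hcol γ (Classical.arbitrary n)).trans (norm_col_le_l2_opNorm _ _))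

lemma sInf_rOpNorm_eq_quotientNorm {d : ℕ} (h : SL(d, ℝ)) :
    sInf {r : ℝ | ∃ γ : SL(d, ℤ), r = rOpNorm
      ((h * Matrix.SpecialLinearGroup.map (n := Fin d) (Int.castRingHom ℝ) γ : SL(d, ℝ)) :
        Matrix (Fin d) (Fin d) ℝ)} = quotientNorm h := by
  simp only [rOpNorm_eq_l2_opNorm, eq_comm (b := ‖_‖)]
  rfl

theorem exists_l2_opNorm_conj_single_le {n : ℕ} (h : SL(n + 1, ℝ)) :
    ∃ (γ : SL(n + 1, ℤ)) (P : SL(n + 1, ℝ)),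
      P = h * Matrix.SpecialLinearGroup.map (Int.castRingHom ℝ) γ ∧
        ‖(P : Matrix (Fin (n + 1)) (Fin (n + 1)) ℝ) * single 0 (Fin.last n) 1 *
          (P : Matrix (Fin (n + 1)) (Fin (n + 1)) ℝ)⁻¹‖ ≤
        4 ^ n * (n + 1) ^ 2 * (quotientNorm h)⁻¹ := by
  obtain ⟨γ, ⟨S⟩⟩ := exists_siegelDecomposition h.det_ne_zero
  let P := h * Matrix.SpecialLinearGroup.map (Int.castRingHom ℝ) γ
  have hdet : |(P : Matrix (Fin (n + 1)) (Fin (n + 1)) ℝ).det| = 1 := by rw [P.det_coe, abs_one]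
  refine ⟨γ, P, rfl, ?_⟩
  rw [le_mul_inv_iff₀ (quotientNorm_pos h)]
  exact (mul_le_mul_of_nonneg_left (quotientNorm_le h γ) (norm_nonneg _)).trans
    (S.l2_opNorm_conj_single_mul_l2_opNorm_le hdet)

end QuotientNorm

/-- **Quantitative Kazhdan–Margulis lemma.** For every `d ≥ 2` there are `k₀, l₀ > 0` such
that for every `h ∈ SL_d(ℝ)` the group `h SL_d(ℤ) h⁻¹` contains a nontrivial unipotent `u`
with `‖u - 1‖ ≤ l₀ ‖π(h)‖^{-k₀}`, where `‖π(h)‖ = inf_{γ ∈ SL_d(ℤ)} ‖h γ‖`. -/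
theorem quantitative_kazhdan_margulis (d : ℕ) (hd : 2 ≤ d) :
    ∃ k₀ l₀ : ℝ, 0 < k₀ ∧ 0 < l₀ ∧
      ∀ h : Matrix.SpecialLinearGroup (Fin d) ℝ,
        ∃ γ : Matrix.SpecialLinearGroup (Fin d) ℤ,
          h * Matrix.SpecialLinearGroup.map (n := Fin d) (Int.castRingHom ℝ) γ * h⁻¹ ≠ 1 ∧
          (((h * Matrix.SpecialLinearGroup.map (n := Fin d) (Int.castRingHom ℝ) γ * h⁻¹ :
              Matrix.SpecialLinearGroup (Fin d) ℝ) : Matrix (Fin d) (Fin d) ℝ) - 1) ^ d = 0 ∧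
          rOpNorm (((h * Matrix.SpecialLinearGroup.map (n := Fin d) (Int.castRingHom ℝ) γ *
                h⁻¹ : Matrix.SpecialLinearGroup (Fin d) ℝ) :
              Matrix (Fin d) (Fin d) ℝ) - 1) ≤
            l₀ * (sInf {r : ℝ | ∃ g : Matrix.SpecialLinearGroup (Fin d) ℤ,
                r = rOpNorm ((h * Matrix.SpecialLinearGroup.map (n := Fin d)
                    (Int.castRingHom ℝ) g : Matrix.SpecialLinearGroup (Fin d) ℝ) :
                  Matrix (Fin d) (Fin d) ℝ)}) ^ (-k₀) := by
  obtain ⟨n, rfl⟩ := Nat.exists_eq_add_of_le' hd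
  have hij : (0 : Fin (n + 1 + 1)) ≠ Fin.last (n + 1) := Fin.last_pos.ne
  refine ⟨1, 4 ^ (n + 1) * (↑(n + 1) + 1) ^ 2, one_pos, by positivity, fun h => ?_⟩
  obtain ⟨γ, P, hP, hbound⟩ := exists_l2_opNorm_conj_single_le h
  have hconj : h * Matrix.SpecialLinearGroup.map (Int.castRingHom ℝ)
      (γ * .transvection hij 1 * γ⁻¹) * h⁻¹ = P * .transvection hij 1 * P⁻¹ := by
    rw [hP, map_mul, map_mul, map_inv, map_transvection, map_one]
    group
  refine ⟨γ * .transvection hij 1 * γ⁻¹, ?_⟩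
  rw [hconj, sInf_rOpNorm_eq_quotientNorm, Real.rpow_neg_one, rOpNorm_eq_l2_opNorm,
    coe_conj_transvection_sub_one]
  exact ⟨mt conj_eq_one_iff.1 (transvection_ne_one hij one_ne_zero),
    pow_eq_zero_of_le hd (conj_single_sq_eq_zero (by simp) hij 1), hbound⟩
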